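/- arXiv:2011.04112 — 4 statements merged into one kernel-verified Lean document; each statement's English description precedes it below -/
import Mathlib

section
/- Let α : ℝ → ℝ be a locally Lipschitz extended class-K function (i.e., α is strictly increasing and α(0) = 0). Let T ∈ (0, ∞], and let v : [0, T) → ℝ be a differentiable function such that v(0) ≥ 0 and v'(t) ≥ -α(v(t)) for all t ∈ [0, T). Then v(t) ≥ 0 for all t ∈ [0, T). -/
/-- Comparison-lemma argument underlying Lemma 1: if `α` is a locally Lipschitz
extended class-K function (strictly increasing with `α 0 = 0`), `T ∈ (0, ∞]`,
and `v : [0, T) → ℝ` is differentiable with `v 0 ≥ 0` and `v' t ≥ -α (v t)` on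
`[0, T)`, then `v t ≥ 0` for all `t ∈ [0, T)`. -/
theorem scalar_comparison_nonneg
    (α : ℝ → ℝ) (hα_lip : LocallyLipschitz α) (hα_mono : StrictMono α) (hα0 : α 0 = 0)
    (T : EReal) (hT : 0 < T)
    (v v' : ℝ → ℝ)
    (hderiv : ∀ t : ℝ, 0 ≤ t → (t : EReal) < T →
      HasDerivWithinAt v (v' t) {s : ℝ | 0 ≤ s ∧ (s : EReal) < T} t)
    (hineq : ∀ t : ℝ, 0 ≤ t → (t : EReal) < T → v' t ≥ -α (v t))
    (hv0 : 0 ≤ v 0) :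
    ∀ t : ℝ, 0 ≤ t → (t : EReal) < T → 0 ≤ v t := by
  intro t ht0 htT
  by_contra! hneg
  have hlt : ∀ s : ℝ, s ≤ t → (s : EReal) < T := fun s hs =>
    lt_of_le_of_lt (EReal.coe_le_coe_iff.2 hs) htT
  have hcont : ContinuousOn v (Set.Icc 0 t) := fun s hs =>
    ((hderiv s hs.1 (hlt s hs.2)).continuousWithinAt).mono
      (fun r hr => ⟨hr.1, hlt r hr.2⟩)
  -- a point where `v` is minimal on `[0, t]`
  obtain ⟨m, hm, hmin⟩ := isCompact_Icc.exists_isMinOn ⟨t, ht0, le_rfl⟩ hcont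
  have hvm : v m < 0 := lt_of_le_of_lt (hmin ⟨ht0, le_rfl⟩) hneg
  have hm0 : 0 < m := lt_of_le_of_ne hm.1 (by rintro rfl; linarith)
  have hα : α (v m) < 0 := hα0 ▸ hα_mono hvm
  have hpos : 0 < v' m := by linarith [hineq m hm.1 (hlt m hm.2)]
  have hd : HasDerivWithinAt v (v' m) (Set.Icc 0 t) m :=
    (hderiv m hm.1 (hlt m hm.2)).mono (fun r hr => ⟨hr.1, hlt r hr.2⟩)
  have hcone : (0 : ℝ) - m ∈ posTangentConeAt (Set.Icc 0 t) m :=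
    sub_mem_posTangentConeAt_of_segment_subset
      ((convex_Icc 0 t).segment_subset hm ⟨le_rfl, ht0⟩)
  have h := hmin.localize.hasFDerivWithinAt_nonneg hd.hasFDerivWithinAt hcone
  simp at h
  nlinarith [mul_pos hm0 hpos]
end

section
/- Let 𝒟 ⊆ ℝⁿ be a set, let f : ℝⁿ → ℝⁿ and g : ℝⁿ → ℝ^{n×m} be continuous, let u : 𝒟 → ℝᵐ be continuous, let h : ℝⁿ → ℝ be continuously differentiable, and let α : ℝ → ℝ be a locally Lipschitz extended class-K function (strictly increasing with α(0) = 0). Assume that for every x ∈ 𝒟, ⟨∇h(x), f(x) + g(x)u(x)⟩ ≥ -α(h(x)). Let T ∈ (0, ∞] and let x : [0, T) → ℝⁿ be a differentiable curve satisfying x'(t) = f(x(t)) + g(x(t))u(x(t)) and x(t) ∈ 𝒟 for all t ∈ [0, T). If h(x(0)) ≥ 0, then h(x(t)) ≥ 0 for all t ∈ [0, T); equivalently, x(0) ∈ 𝒞 := {x ∈ ℝⁿ | h(x) ≥ 0} implies x(t) ∈ 𝒞 for all t ∈ [0, T). -/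
/-- Forward-invariance part of Lemma 1: for the control system
`ẋ = f x + g x · u x` with continuous `f`, `g`, `u` on `𝒟`, if `h` is a `C¹`
function satisfying the control barrier function inequality
`⟨∇h x, f x + g x · u x⟩ ≥ -α (h x)` on `𝒟` for a locally Lipschitz extended
class-K function `α`, then along any solution `x : [0, T) → ℝⁿ` remaining in
`𝒟`, `h (x 0) ≥ 0` implies `h (x t) ≥ 0` for all `t ∈ [0, T)`. -/
theorem cbf_forward_invariance {n m : ℕ}
    (𝒟 : Set (Fin n → ℝ))
    (f : (Fin n → ℝ) → (Fin n → ℝ))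
    (g : (Fin n → ℝ) → (Fin n → Fin m → ℝ))
    (u : (Fin n → ℝ) → (Fin m → ℝ))
    (hf : Continuous f) (hg : Continuous g) (hu : ContinuousOn u 𝒟)
    (h : (Fin n → ℝ) → ℝ) (hh : ContDiff ℝ 1 h)
    (α : ℝ → ℝ) (hα_lip : LocallyLipschitz α) (hα_mono : StrictMono α) (hα0 : α 0 = 0)
    (hcbf : ∀ z ∈ 𝒟, fderiv ℝ h z (f z + fun i => ∑ j, g z i j * u z j) ≥ -α (h z))
    (T : EReal) (hT : 0 < T)
    (x : ℝ → (Fin n → ℝ))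
    (hx : ∀ t : ℝ, 0 ≤ t → (t : EReal) < T →
      HasDerivWithinAt x (f (x t) + fun i => ∑ j, g (x t) i j * u (x t) j)
        {s : ℝ | 0 ≤ s ∧ (s : EReal) < T} t)
    (hxD : ∀ t : ℝ, 0 ≤ t → (t : EReal) < T → x t ∈ 𝒟)
    (h0 : 0 ≤ h (x 0)) :
    ∀ t : ℝ, 0 ≤ t → (t : EReal) < T → 0 ≤ h (x t) := by
  intro t ht0 htT
  have hlt : ∀ s : ℝ, s ≤ t → (s : EReal) < T := fun s hs =>
    lt_of_le_of_lt (EReal.coe_le_coe_iff.2 hs) htT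
  have hd : ∀ s : ℝ, 0 ≤ s → s ≤ t → HasDerivWithinAt (fun r => -h (x r))
      (-(fderiv ℝ h (x s) (f (x s) + fun i => ∑ j, g (x s) i j * u (x s) j)))
      {s : ℝ | 0 ≤ s ∧ (s : EReal) < T} s := by
    intro s hs0 hst
    have h1 : HasFDerivAt h (fderiv ℝ h (x s)) (x s) :=
      (hh.differentiable one_ne_zero (x s)).hasFDerivAt
    exact (h1.comp_hasDerivWithinAt s (hx s hs0 (hlt s hst))).neg
  refine le_of_forall_pos_le_add fun ε hε => ?_
  have key := image_le_of_deriv_right_lt_deriv_boundary (f := fun r => -h (x r))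
    (f' := fun s => -(fderiv ℝ h (x s) (f (x s) + fun i => ∑ j, g (x s) i j * u (x s) j)))
    (a := 0) (b := t) (B := fun _ => ε) (B' := fun _ => 0)
    (fun s hs => ((hd s hs.1 hs.2).continuousWithinAt).mono
      (fun r hr => ⟨hr.1, hlt r hr.2⟩))
    (fun s hs => by
      refine (hd s hs.1 hs.2.le).mono_of_mem_nhdsWithin ?_
      filter_upwards [Icc_mem_nhdsGE hs.2] with r hr
      exact ⟨hs.1.trans hr.1, hlt r hr.2⟩)
    (by linarith)
    (fun s => hasDerivAt_const s ε)
    (fun s hs he => by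
      have h1 := hcbf (x s) (hxD s hs.1 (hlt s hs.2.le))
      have h2 : α (h (x s)) < α 0 := hα_mono (by linarith)
      linarith)
  have := key (Set.right_mem_Icc.2 ht0)
  linarith
end

section
/- Fix p ≥ 1 and use the ℓᵖ-norm ‖·‖ₚ on ℝⁿ. Let 𝒟_C ⊆ ℝⁿ, let γ_dyn > 0 and ε_c > 0, and let Z_dyn^c = {(z¹, u¹), …, (z^{N_c}, u^{N_c})} be a finite set of state-input pairs with zⁱ ∈ ℝⁿ and uⁱ ∈ ℝᵐ such that {z¹, …, z^{N_c}} is an ε_c-net of 𝒟_C. Let h : ℝⁿ → ℝ be twice continuously differentiable, let α : ℝ → ℝ be a locally Lipschitz extended class-K function (strictly increasing with α(0) = 0), let f_c : ℝⁿ → ℝⁿ and g_c : ℝⁿ → ℝ^{n×m} be locally Lipschitz continuous, and define q_c(z, u) := ⟨∇h(z), f_c(z) + g_c(z)u⟩ + α(h(z)). Assume that for each i, the function z ↦ q_c(z, uⁱ) is Lipschitz continuous on the closed ball {z : ‖z − zⁱ‖ₚ ≤ ε_c} with constant L_q^c(zⁱ, uⁱ) > 0, that ε_c ≤ γ_dyn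 / L_q^c(zⁱ, uⁱ) for all i, and that q_c(zⁱ, uⁱ) ≥ γ_dyn for all i. Then for every z ∈ 𝒟_C and every index i with ‖z − zⁱ‖ₚ ≤ ε_c, one has q_c(z, uⁱ) ≥ 0; in particular, for every z ∈ 𝒟_C there exists an input u = uⁱ with ⟨∇h(z), f_c(z) + g_c(z)u⟩ ≥ −α(h(z)). -/
/-- The ℓᵖ-norm on `ℝⁿ` for a real exponent `p ≥ 1`. -/
noncomputable def lpNorm {n : ℕ} (p : ℝ) (z : Fin n → ℝ) : ℝ :=
  (∑ i, |z i| ^ p) ^ (1 / p)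

/-- Flow part of Proposition 3 (prop:2): if the states of the expert data
`Z_dyn^c` form an `ε_c`-net (in the ℓᵖ-norm, `p ≥ 1`) of `𝒟_C`, the function
`q_c (z, uⁱ) = ⟨∇h z, f_c z + g_c z uⁱ⟩ + α (h z)` is Lipschitz with local
constant `L_q^c (zⁱ, uⁱ)` on the closed `ε_c`-ball around each `zⁱ`,
`ε_c ≤ γ_dyn / L_q^c (zⁱ, uⁱ)`, and `q_c (zⁱ, uⁱ) ≥ γ_dyn`, then
`q_c (z, uⁱ) ≥ 0` for every `z ∈ 𝒟_C` and every data point with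
`‖z - zⁱ‖ₚ ≤ ε_c`; in particular the flow HCBF condition holds on `𝒟_C`. -/
theorem prop3_flow {n m : ℕ} (p : ℝ) (hp : 1 ≤ p)
    (𝒟C : Set (Fin n → ℝ)) (γdyn εc : ℝ) (hγ : 0 < γdyn) (hε : 0 < εc)
    (Zdync : Finset ((Fin n → ℝ) × (Fin m → ℝ)))
    (hnet : ∀ z ∈ 𝒟C, ∃ zu ∈ Zdync, lpNorm p (z - zu.1) ≤ εc)
    (h : (Fin n → ℝ) → ℝ) (hh : ContDiff ℝ 2 h)
    (α : ℝ → ℝ) (hα_lip : LocallyLipschitz α) (hα_mono : StrictMono α) (hα0 : α 0 = 0)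
    (fc : (Fin n → ℝ) → (Fin n → ℝ))
    (gc : (Fin n → ℝ) → (Fin n → Fin m → ℝ))
    (hfc : LocallyLipschitz fc) (hgc : LocallyLipschitz gc)
    (qc : (Fin n → ℝ) → (Fin m → ℝ) → ℝ)
    (hqc : ∀ z u, qc z u =
      fderiv ℝ h z (fc z + fun i => ∑ j, gc z i j * u j) + α (h z))
    (Lqc : (Fin n → ℝ) × (Fin m → ℝ) → ℝ)
    (hLpos : ∀ zu ∈ Zdync, 0 < Lqc zu)
    (hlip : ∀ zu ∈ Zdync, ∀ z z' : Fin n → ℝ,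
      lpNorm p (z - zu.1) ≤ εc → lpNorm p (z' - zu.1) ≤ εc →
      |qc z zu.2 - qc z' zu.2| ≤ Lqc zu * lpNorm p (z - z'))
    (hεγ : ∀ zu ∈ Zdync, εc ≤ γdyn / Lqc zu)
    (hdyn : ∀ zu ∈ Zdync, γdyn ≤ qc zu.1 zu.2) :
    (∀ z ∈ 𝒟C, ∀ zu ∈ Zdync, lpNorm p (z - zu.1) ≤ εc → 0 ≤ qc z zu.2) ∧
    (∀ z ∈ 𝒟C, ∃ u : Fin m → ℝ,
      fderiv ℝ h z (fc z + fun i => ∑ j, gc z i j * u j) ≥ -α (h z)) := by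
  have key : ∀ z ∈ 𝒟C, ∀ zu ∈ Zdync, lpNorm p (z - zu.1) ≤ εc → 0 ≤ qc z zu.2 := by
    intro z _ zu hzu hz
    have hp0 : p ≠ 0 := by linarith
    have h0 : lpNorm p (zu.1 - zu.1) ≤ εc := by
      have : lpNorm p (zu.1 - zu.1) = 0 := by
        simp [lpNorm, Real.zero_rpow hp0, Real.zero_rpow (inv_ne_zero hp0)]
      rw [this]
      exact hε.le
    have h1 := hlip zu hzu z zu.1 hz h0
    have hL := hLpos zu hzu
    have h2 : Lqc zu * lpNorm p (z - zu.1) ≤ Lqc zu * εc :=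
      mul_le_mul_of_nonneg_left hz hL.le
    have h3 : εc * Lqc zu ≤ γdyn := (le_div_iff₀ hL).mp (hεγ zu hzu)
    have h4 := (abs_le.mp h1).1
    have h5 := hdyn zu hzu
    linarith
  refine ⟨key, fun z hz => ?_⟩
  obtain ⟨zu, hzu, hd⟩ := hnet z hz
  refine ⟨zu.2, ?_⟩
  have h1 := key z hz zu hzu hd
  rw [hqc] at h1
  linarith
end

section
/- Fix p ≥ 1 and use the ℓᵖ-norm ‖·‖ₚ on ℝⁿ. Let 𝒟_D ⊆ ℝⁿ, let γ_dyn > 0 and ε_d > 0, and let Z_dyn^d = {(z¹, u¹), …, (z^{N_d}, u^{N_d})} be a finite set of state-input pairs with zⁱ ∈ ℝⁿ and uⁱ ∈ ℝᵐ such that {z¹, …, z^{N_d}} is an ε_d-net of 𝒟_D. Let h : ℝⁿ → ℝ be twice continuously differentiable, let f_d : ℝⁿ → ℝⁿ and g_d : ℝⁿ → ℝ^{n×m} be locally Lipschitz continuous, and define q_d(z, u) := h(f_d(z) + g_d(z)u). Assume that for each i, the function z ↦ q_d(z, uⁱ) is Lipschitz continuous on the closed ball {z : ‖z − zⁱ‖ₚ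 ≤ ε_d} with constant L_q^d(zⁱ, uⁱ) > 0, that ε_d ≤ γ_dyn / L_q^d(zⁱ, uⁱ) for all i, and that q_d(zⁱ, uⁱ) ≥ γ_dyn for all i. Then for every z ∈ 𝒟_D and every index i with ‖z − zⁱ‖ₚ ≤ ε_d, one has q_d(z, uⁱ) ≥ 0; in particular, for every z ∈ 𝒟_D there exists an input u = uⁱ with h(f_d(z) + g_d(z)u) ≥ 0. -/
/-- Jump part of Proposition 3 (prop:2): if the states of the expert data
`Z_dyn^d` form an `ε_d`-net (in the ℓᵖ-norm, `p ≥ 1`) of `𝒟_D`, the function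
`q_d (z, uⁱ) = h (f_d z + g_d z uⁱ)` is Lipschitz with local constant
`L_q^d (zⁱ, uⁱ)` on the closed `ε_d`-ball around each `zⁱ`,
`ε_d ≤ γ_dyn / L_q^d (zⁱ, uⁱ)`, and `q_d (zⁱ, uⁱ) ≥ γ_dyn`, then
`q_d (z, uⁱ) ≥ 0` for every `z ∈ 𝒟_D` and every data point with
`‖z - zⁱ‖ₚ ≤ ε_d`; in particular the jump HCBF condition holds on `𝒟_D`. -/
theorem prop3_jump {n m : ℕ} (p : ℝ) (hp : 1 ≤ p)
    (𝒟D : Set (Fin n → ℝ)) (γdyn εd : ℝ) (hγ : 0 < γdyn) (hε : 0 < εd)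
    (Zdynd : Finset ((Fin n → ℝ) × (Fin m → ℝ)))
    (hnet : ∀ z ∈ 𝒟D, ∃ zu ∈ Zdynd, lpNorm p (z - zu.1) ≤ εd)
    (h : (Fin n → ℝ) → ℝ) (hh : ContDiff ℝ 2 h)
    (fd : (Fin n → ℝ) → (Fin n → ℝ))
    (gd : (Fin n → ℝ) → (Fin n → Fin m → ℝ))
    (hfd : LocallyLipschitz fd) (hgd : LocallyLipschitz gd)
    (qd : (Fin n → ℝ) → (Fin m → ℝ) → ℝ)
    (hqd : ∀ z u, qd z u = h (fd z + fun i => ∑ j, gd z i j * u j))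
    (Lqd : (Fin n → ℝ) × (Fin m → ℝ) → ℝ)
    (hLpos : ∀ zu ∈ Zdynd, 0 < Lqd zu)
    (hlip : ∀ zu ∈ Zdynd, ∀ z z' : Fin n → ℝ,
      lpNorm p (z - zu.1) ≤ εd → lpNorm p (z' - zu.1) ≤ εd →
      |qd z zu.2 - qd z' zu.2| ≤ Lqd zu * lpNorm p (z - z'))
    (hεγ : ∀ zu ∈ Zdynd, εd ≤ γdyn / Lqd zu)
    (hdyn : ∀ zu ∈ Zdynd, γdyn ≤ qd zu.1 zu.2) :
    (∀ z ∈ 𝒟D, ∀ zu ∈ Zdynd, lpNorm p (z - zu.1) ≤ εd → 0 ≤ qd z zu.2) ∧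
    (∀ z ∈ 𝒟D, ∃ u : Fin m → ℝ,
      0 ≤ h (fd z + fun i => ∑ j, gd z i j * u j)) := by
  have key : ∀ z ∈ 𝒟D, ∀ zu ∈ Zdynd, lpNorm p (z - zu.1) ≤ εd → 0 ≤ qd z zu.2 := by
    intro z _ zu hzu hz
    have hp0 : p ≠ 0 := by linarith
    have h0 : lpNorm p (zu.1 - zu.1) ≤ εd := by
      have : lpNorm p (zu.1 - zu.1) = 0 := by
        simp [lpNorm, Real.zero_rpow hp0, Real.zero_rpow (inv_ne_zero hp0)]
      rw [this]
      exact hε.le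
    have h1 := (abs_le.mp (hlip zu hzu z zu.1 hz h0)).1
    have hL := hLpos zu hzu
    have h2 : εd * Lqd zu ≤ γdyn := (le_div_iff₀ hL).mp (hεγ zu hzu)
    have h3 : Lqd zu * lpNorm p (z - zu.1) ≤ Lqd zu * εd :=
      mul_le_mul_of_nonneg_left hz hL.le
    have h4 := hdyn zu hzu
    linarith
  refine ⟨key, fun z hz => ?_⟩
  obtain ⟨zu, hzu, hd⟩ := hnet z hz
  refine ⟨zu.2, ?_⟩
  rw [← hqd]
  exact key z hz zu hzu hd
end
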